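/- arXiv:1711.06447 — 3 statements merged into one kernel-verified Lean document; each statement's English description precedes it below -/
import Mathlib

section
/- For any 0 < α < 1 and any nonzero x ∈ ℝ³ and t > 0, ∫₀^t ∫_{ℝ³} |y - x|^{-(2+α)} p_s(y) dy ds ≤ (2/(α(1-α))) |x|^{-α}, where p_s is the 3-dimensional heat kernel. -/
open MeasureTheory Real Filter Topology

noncomputable def heatKernel (d : ℕ) (t : ℝ) (y : EuclideanSpace ℝ (Fin d)) : ℝ :=
  (2 * Real.pi * t) ^ (-(d : ℝ) / 2) * Real.exp (-‖y‖ ^ 2 / (2 * t))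

/-!
Write `|y - x|^{-β}` as a Gamma-weighted superposition of the Gaussians `exp (-u |y - x|²)`,
`u > 0`. Each Gaussian integrates explicitly against `p_s`, giving `q^{-d/2} exp (-u |x|² / q)` with
`q = 1 + 2us`. For fixed `u`, the substitution `v = 1 / q` turns the time integral into an integral
over `(0, 1)`; the `u`-integral is then again a Gamma integral and a power of `v` remains. By
Tonelli this evaluates the integral over all times exactly: for `β = 2 + α` in dimension `d` it
equals `2 / (α (d - 2 - α)) |x|^{-α}`.
-/

section OneVariable

lemma lintegral_ofReal_of_integral_ne_zero {X : Type*} [MeasurableSpace X] {μ : Measure X}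
    {f : X → ℝ} (hf : 0 ≤ᵐ[μ] f) (hne : ∫ x, f x ∂μ ≠ 0) :
    ∫⁻ x, ENNReal.ofReal (f x) ∂μ = ENNReal.ofReal (∫ x, f x ∂μ) :=
  (ofReal_integral_eq_lintegral_ofReal (.of_integral_ne_zero hne) hf).symm

lemma lintegral_rpow_mul_exp_neg_mul_Ioi {a r : ℝ} (ha : 0 < a) (hr : 0 < r) :
    ∫⁻ u in Set.Ioi 0, ENNReal.ofReal (u ^ (a - 1) * exp (-(r * u))) =
      ENNReal.ofReal (Gamma a * r ^ (-a)) := by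
  have hint : ∫ u in Set.Ioi 0, u ^ (a - 1) * exp (-(r * u)) = Gamma a * r ^ (-a) := by
    rw [integral_rpow_mul_exp_neg_mul_Ioi ha hr, one_div, inv_rpow hr.le, rpow_neg hr.le, mul_comm]
  rw [lintegral_ofReal_of_integral_ne_zero, hint]
  · filter_upwards [ae_restrict_mem measurableSet_Ioi] with u (hu : 0 < u)
    exact mul_nonneg (by positivity) (exp_pos _).le
  · rw [hint]
    exact (mul_pos (Gamma_pos_of_pos ha) (by positivity)).ne'

lemma sq_rpow_neg_half {r : ℝ} (hr : 0 ≤ r) (β : ℝ) : (r ^ 2) ^ (-(β / 2)) = r ^ (-β) := by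
  rw [← rpow_two, ← rpow_mul hr, mul_neg, mul_div_cancel₀ β two_ne_zero]

lemma lintegral_rpow_mul_exp_neg_mul_sq {β r : ℝ} (hβ : 0 < β) (hr : 0 < r) :
    ∫⁻ u in Set.Ioi 0, ENNReal.ofReal (u ^ (β / 2 - 1) * exp (-(u * r ^ 2))) =
      ENNReal.ofReal (Gamma (β / 2) * r ^ (-β)) := by
  simpa only [sq_rpow_neg_half hr.le, mul_comm] using
    lintegral_rpow_mul_exp_neg_mul_Ioi (half_pos hβ) (pow_pos hr 2)

lemma lintegral_rpow_Ioo_zero_one {b : ℝ} (hb : -1 < b) :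
    ∫⁻ v in Set.Ioo (0 : ℝ) 1, ENNReal.ofReal (v ^ b) = ENNReal.ofReal (1 / (b + 1)) := by
  have hint : ∫ v in Set.Ioo (0 : ℝ) 1, v ^ b = 1 / (b + 1) := by
    rw [← integral_Ioc_eq_integral_Ioo, ← intervalIntegral.integral_of_le zero_le_one,
      integral_rpow (.inl hb), one_rpow, zero_rpow (by linarith), sub_zero]
  rw [lintegral_ofReal_of_integral_ne_zero, hint]
  · filter_upwards [ae_restrict_mem measurableSet_Ioo] with v hv
    exact rpow_nonneg hv.1.le b
  · rw [hint]
    exact (one_div_pos.2 (by linarith)).ne'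

lemma image_inv_one_add_mul_Ioi {c : ℝ} (hc : 0 < c) :
    (fun s ↦ (1 + c * s)⁻¹) '' Set.Ioi 0 = Set.Ioo 0 1 := by
  ext v
  constructor
  · rintro ⟨s, hs : 0 < s, rfl⟩
    have : 0 < c * s := mul_pos hc hs
    exact ⟨by positivity, inv_lt_one_of_one_lt₀ (by linarith)⟩
  · rintro ⟨hv0, hv1⟩
    refine ⟨(v⁻¹ - 1) / c, div_pos (sub_pos.2 ((one_lt_inv₀ hv0).2 hv1)) hc, ?_⟩
    simp only [mul_div_cancel₀ _ hc.ne', add_sub_cancel, inv_inv]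

lemma lintegral_Ioo_eq_lintegral_Ioi_inv_one_add_mul {c : ℝ} (hc : 0 < c) (f : ℝ → ENNReal) :
    ∫⁻ v in Set.Ioo 0 1, f v =
      ∫⁻ s in Set.Ioi 0, ENNReal.ofReal (c / (1 + c * s) ^ 2) * f (1 + c * s)⁻¹ := by
  have hderiv : ∀ s ∈ Set.Ioi (0 : ℝ), HasDerivWithinAt (fun s ↦ (1 + c * s)⁻¹)
      (-c / (1 + c * s) ^ 2) (Set.Ioi 0) s := by
    intro s (hs : 0 < s)
    have hlin : HasDerivAt (fun s ↦ 1 + c * s) c s := by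
      simpa using ((hasDerivAt_id s).const_mul c).const_add 1
    exact (hlin.fun_inv (by positivity)).hasDerivWithinAt
  have hinj : Set.InjOn (fun s ↦ (1 + c * s)⁻¹) (Set.Ioi 0) := fun a _ b _ hab ↦
    mul_left_cancel₀ hc.ne' (add_left_cancel (inv_injective hab))
  rw [← image_inv_one_add_mul_Ioi hc,
    lintegral_image_eq_lintegral_abs_deriv_mul measurableSet_Ioi hderiv hinj]
  simp only [neg_div, abs_neg, abs_div, abs_of_pos hc, abs_sq]

lemma lintegral_one_add_mul_rpow_neg_mul {c : ℝ} (hc : 0 < c) (p : ℝ) (f : ℝ → ENNReal) :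
    ∫⁻ s in Set.Ioi 0, ENNReal.ofReal ((1 + c * s) ^ (-p)) * f (1 + c * s)⁻¹ =
      ∫⁻ v in Set.Ioo 0 1, ENNReal.ofReal (c⁻¹ * v ^ (p - 2)) * f v := by
  rw [lintegral_Ioo_eq_lintegral_Ioi_inv_one_add_mul hc]
  refine setLIntegral_congr_fun measurableSet_Ioi fun s (hs : 0 < s) ↦ ?_
  have hq : 0 < 1 + c * s := by positivity
  have hpow : (1 + c * s) ^ (-p) = c / (1 + c * s) ^ 2 * (c⁻¹ * (1 + c * s)⁻¹ ^ (p - 2)) := by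
    rw [inv_rpow hq.le, ← rpow_neg hq.le, neg_sub, rpow_sub hq, rpow_neg hq.le, rpow_two]
    field_simp
  rw [hpow, ENNReal.ofReal_mul (by positivity), mul_assoc]

lemma lintegral_rpow_mul_exp_neg_mul_mul {a R v : ℝ} (ha : 0 < a) (hR : 0 < R) (hv : 0 < v)
    (p : ℝ) :
    ∫⁻ u in Set.Ioi 0, ENNReal.ofReal (u ^ a) *
        (ENNReal.ofReal ((2 * u)⁻¹ * v ^ (p - 2)) * ENNReal.ofReal (exp (-(u * R * v)))) =
      ENNReal.ofReal (Gamma a * R ^ (-a) / 2) * ENNReal.ofReal (v ^ (p - 2 - a)) := by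
  have hfactor : ∀ u ∈ Set.Ioi (0 : ℝ), ENNReal.ofReal (u ^ a) *
      (ENNReal.ofReal ((2 * u)⁻¹ * v ^ (p - 2)) * ENNReal.ofReal (exp (-(u * R * v)))) =
      ENNReal.ofReal (v ^ (p - 2) / 2) *
        ENNReal.ofReal (u ^ (a - 1) * exp (-(R * v * u))) := by
    intro u (hu : 0 < u)
    rw [← ENNReal.ofReal_mul (by positivity), ← ENNReal.ofReal_mul (by positivity),
      ← ENNReal.ofReal_mul (by positivity), rpow_sub_one hu.ne', mul_assoc u, mul_comm u (R * v)]
    congr 1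
    field_simp
  rw [setLIntegral_congr_fun measurableSet_Ioi hfactor,
    lintegral_const_mul' _ _ ENNReal.ofReal_ne_top,
    lintegral_rpow_mul_exp_neg_mul_Ioi ha (mul_pos hR hv),
    ← ENNReal.ofReal_mul (by positivity), ← ENNReal.ofReal_mul (by positivity),
    mul_rpow hR.le hv.le, sub_eq_add_neg _ a, rpow_add hv]
  congr 1
  ring

lemma lintegral_lintegral_rpow_mul_one_add_mul_rpow_mul_exp {a p R : ℝ} (ha : 0 < a)
    (hp : a + 1 < p) (hR : 0 < R) :
    ∫⁻ s in Set.Ioi 0, ∫⁻ u in Set.Ioi 0, ENNReal.ofReal (u ^ a) *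
        (ENNReal.ofReal ((1 + 2 * u * s) ^ (-p)) *
          ENNReal.ofReal (exp (-(u * R * (1 + 2 * u * s)⁻¹)))) =
      ENNReal.ofReal (Gamma a * R ^ (-a) / (2 * (p - 1 - a))) := by
  calc _ = ∫⁻ u in Set.Ioi 0, ∫⁻ s in Set.Ioi 0, ENNReal.ofReal (u ^ a) *
          (ENNReal.ofReal ((1 + 2 * u * s) ^ (-p)) *
            ENNReal.ofReal (exp (-(u * R * (1 + 2 * u * s)⁻¹)))) :=
        lintegral_lintegral_swap (by fun_prop)
    _ = ∫⁻ u in Set.Ioi 0, ∫⁻ v in Set.Ioo 0 1, ENNReal.ofReal (u ^ a) *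
          (ENNReal.ofReal ((2 * u)⁻¹ * v ^ (p - 2)) * ENNReal.ofReal (exp (-(u * R * v)))) := by
        refine setLIntegral_congr_fun measurableSet_Ioi fun u (hu : 0 < u) ↦ ?_
        simp only [lintegral_const_mul' _ _ ENNReal.ofReal_ne_top]
        rw [lintegral_one_add_mul_rpow_neg_mul (by positivity) p
          fun v ↦ ENNReal.ofReal (exp (-(u * R * v)))]
    _ = ∫⁻ v in Set.Ioo 0 1, ∫⁻ u in Set.Ioi 0, ENNReal.ofReal (u ^ a) *
          (ENNReal.ofReal ((2 * u)⁻¹ * v ^ (p - 2)) * ENNReal.ofReal (exp (-(u * R * v)))) :=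
        lintegral_lintegral_swap (by fun_prop)
    _ = ∫⁻ v in Set.Ioo 0 1, ENNReal.ofReal (Gamma a * R ^ (-a) / 2) *
          ENNReal.ofReal (v ^ (p - 2 - a)) :=
        setLIntegral_congr_fun measurableSet_Ioo fun v hv ↦
          lintegral_rpow_mul_exp_neg_mul_mul ha hR hv.1 p
    _ = _ := by
        rw [lintegral_const_mul' _ _ ENNReal.ofReal_ne_top,
          lintegral_rpow_Ioo_zero_one (by linarith), ← ENNReal.ofReal_mul (by positivity),
          div_mul_div_comm, mul_one]
        ring_nf

end OneVariable

section Gaussian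

variable {V : Type*} [NormedAddCommGroup V] [InnerProductSpace ℝ V]

lemma mul_norm_sub_sq_add_mul_norm_sq {a b : ℝ} (hab : a + b ≠ 0) (x y : V) :
    a * ‖y - x‖ ^ 2 + b * ‖y‖ ^ 2 =
      (a + b) * ‖y - (a / (a + b)) • x‖ ^ 2 + a * b / (a + b) * ‖x‖ ^ 2 := by
  rw [norm_sub_sq_real, norm_sub_sq_real, inner_smul_right, norm_smul, mul_pow, norm_eq_abs, sq_abs]
  field_simp
  ring

variable [FiniteDimensional ℝ V] [MeasurableSpace V] [BorelSpace V]

lemma lintegral_exp_neg_mul_norm_sq {b : ℝ} (hb : 0 < b) :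
    ∫⁻ y : V, ENNReal.ofReal (exp (-b * ‖y‖ ^ 2)) =
      ENNReal.ofReal ((π / b) ^ (Module.finrank ℝ V / 2 : ℝ)) := by
  have hint := GaussianFourier.integral_rexp_neg_mul_sq_norm (V := V) hb
  rw [lintegral_ofReal_of_integral_ne_zero (.of_forall fun _ ↦ (exp_pos _).le), hint]
  rw [hint]
  positivity

lemma lintegral_exp_neg_mul_norm_sub_sq_mul_exp_neg_mul_norm_sq {a b : ℝ} (hab : 0 < a + b)
    (x : V) :
    ∫⁻ y, ENNReal.ofReal (exp (-(a * ‖y - x‖ ^ 2)) * exp (-(b * ‖y‖ ^ 2))) =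
      ENNReal.ofReal ((π / (a + b)) ^ (Module.finrank ℝ V / 2 : ℝ) *
        exp (-(a * b / (a + b) * ‖x‖ ^ 2))) := by
  have hsquare (y : V) : exp (-(a * ‖y - x‖ ^ 2)) * exp (-(b * ‖y‖ ^ 2)) =
      exp (-(a + b) * ‖y - (a / (a + b)) • x‖ ^ 2) * exp (-(a * b / (a + b) * ‖x‖ ^ 2)) := by
    rw [← exp_add, ← exp_add, ← neg_add, mul_norm_sub_sq_add_mul_norm_sq hab.ne', neg_add, neg_mul]
  simp only [hsquare, ENNReal.ofReal_mul (exp_pos _).le]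
  rw [lintegral_mul_const' _ _ ENNReal.ofReal_ne_top,
    lintegral_sub_right_eq_self fun y : V ↦ ENNReal.ofReal (exp (-(a + b) * ‖y‖ ^ 2)),
    lintegral_exp_neg_mul_norm_sq hab, ENNReal.ofReal_mul (by positivity)]

end Gaussian

section HeatKernel

variable {d : ℕ}

@[fun_prop]
lemma measurable_heatKernel (s : ℝ) : Measurable (heatKernel d s) := by
  unfold heatKernel
  fun_prop

lemma heatKernel_nonneg {s : ℝ} (hs : 0 ≤ s) (y : EuclideanSpace ℝ (Fin d)) :
    0 ≤ heatKernel d s y := by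
  unfold heatKernel
  positivity

lemma lintegral_exp_neg_mul_norm_sub_sq_mul_heatKernel {u s : ℝ} (hu : 0 ≤ u) (hs : 0 < s)
    (x : EuclideanSpace ℝ (Fin d)) :
    ∫⁻ y, ENNReal.ofReal (exp (-(u * ‖y - x‖ ^ 2)) * heatKernel d s y) =
      ENNReal.ofReal ((1 + 2 * u * s) ^ (-(d / 2 : ℝ))) *
        ENNReal.ofReal (exp (-(u * ‖x‖ ^ 2 * (1 + 2 * u * s)⁻¹))) := by
  have hq : 0 < 1 + 2 * u * s := by positivity
  have hsum : u + (2 * s)⁻¹ = (1 + 2 * u * s) / (2 * s) := by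
    field_simp
    ring
  have hkernel (y : EuclideanSpace ℝ (Fin d)) :
      exp (-(u * ‖y - x‖ ^ 2)) * heatKernel d s y = (2 * π * s) ^ (-(d / 2 : ℝ)) *
        (exp (-(u * ‖y - x‖ ^ 2)) * exp (-((2 * s)⁻¹ * ‖y‖ ^ 2))) := by
    rw [heatKernel, mul_left_comm, neg_div, neg_div, div_eq_inv_mul (‖y‖ ^ 2)]
  have hconst : (2 * π * s) ^ (-(d / 2 : ℝ)) * (π / (u + (2 * s)⁻¹)) ^ (d / 2 : ℝ) =
      (1 + 2 * u * s) ^ (-(d / 2 : ℝ)) := by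
    have hquot : π / (u + (2 * s)⁻¹) = 2 * π * s / (1 + 2 * u * s) := by
      rw [hsum]
      field_simp
    rw [hquot, div_rpow (by positivity) hq.le, rpow_neg (by positivity), rpow_neg hq.le]
    field_simp
  have hexponent : u * (2 * s)⁻¹ / (u + (2 * s)⁻¹) * ‖x‖ ^ 2 =
      u * ‖x‖ ^ 2 * (1 + 2 * u * s)⁻¹ := by
    rw [hsum]
    field_simp
  have hpos : 0 < u + (2 * s)⁻¹ := by positivity
  simp only [hkernel, ENNReal.ofReal_mul (rpow_nonneg (by positivity : 0 ≤ 2 * π * s) _)]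
  rw [lintegral_const_mul' _ _ ENNReal.ofReal_ne_top,
    lintegral_exp_neg_mul_norm_sub_sq_mul_exp_neg_mul_norm_sq hpos, finrank_euclideanSpace_fin,
    hexponent, ← ENNReal.ofReal_mul (by positivity), ← mul_assoc, hconst,
    ENNReal.ofReal_mul (by positivity)]

lemma Gamma_mul_lintegral_norm_sub_rpow_mul_heatKernel (hd : d ≠ 0) {β s : ℝ} (hβ : 0 < β)
    (hs : 0 < s) (x : EuclideanSpace ℝ (Fin d)) :
    ENNReal.ofReal (Gamma (β / 2)) *
        ∫⁻ y, ENNReal.ofReal (‖y - x‖ ^ (-β) * heatKernel d s y) =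
      ∫⁻ u in Set.Ioi 0, ENNReal.ofReal (u ^ (β / 2 - 1)) *
        (ENNReal.ofReal ((1 + 2 * u * s) ^ (-(d / 2 : ℝ))) *
          ENNReal.ofReal (exp (-(u * ‖x‖ ^ 2 * (1 + 2 * u * s)⁻¹)))) := by
  have : NeZero d := ⟨hd⟩
  have hΓ := Gamma_pos_of_pos (half_pos hβ)
  -- At `y = x` this can fail: `0 ^ (-β) = 0` in Lean, while the right-hand integral diverges.
  have hsubord : ∀ᵐ y : EuclideanSpace ℝ (Fin d),
      ENNReal.ofReal (Gamma (β / 2)) * ENNReal.ofReal (‖y - x‖ ^ (-β) * heatKernel d s y) =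
        ∫⁻ u in Set.Ioi 0, ENNReal.ofReal (u ^ (β / 2 - 1)) *
          ENNReal.ofReal (exp (-(u * ‖y - x‖ ^ 2)) * heatKernel d s y) := by
    filter_upwards [Measure.ae_ne volume x] with y hy
    rw [← ENNReal.ofReal_mul hΓ.le, ← mul_assoc, ENNReal.ofReal_mul' (heatKernel_nonneg hs.le y),
      ← lintegral_rpow_mul_exp_neg_mul_sq hβ (norm_sub_pos_iff.2 hy),
      ← lintegral_mul_const' _ _ ENNReal.ofReal_ne_top]
    refine setLIntegral_congr_fun measurableSet_Ioi fun u (hu : 0 < u) ↦ ?_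
    simp only [ENNReal.ofReal_mul (exp_pos _).le, ENNReal.ofReal_mul (rpow_nonneg hu.le _),
      mul_assoc]
  rw [← lintegral_const_mul' _ _ ENNReal.ofReal_ne_top, lintegral_congr_ae hsubord,
    lintegral_lintegral_swap (by fun_prop)]
  refine setLIntegral_congr_fun measurableSet_Ioi fun u (hu : 0 < u) ↦ ?_
  simp only [lintegral_const_mul' _ _ ENNReal.ofReal_ne_top,
    lintegral_exp_neg_mul_norm_sub_sq_mul_heatKernel hu.le hs]

theorem lintegral_lintegral_norm_sub_rpow_mul_heatKernel {α : ℝ} (hα0 : 0 < α)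
    (hαd : α < d - 2) {x : EuclideanSpace ℝ (Fin d)} (hx : x ≠ 0) :
    ∫⁻ s in Set.Ioi 0, ∫⁻ y, ENNReal.ofReal (‖y - x‖ ^ (-(2 + α)) * heatKernel d s y) =
      ENNReal.ofReal (2 / (α * (d - 2 - α)) * ‖x‖ ^ (-α)) := by
  have hd : d ≠ 0 := by
    rintro rfl
    rw [Nat.cast_zero] at hαd
    linarith
  have hx' : 0 < ‖x‖ := norm_pos_iff.2 hx
  have hhalf : (2 + α) / 2 = α / 2 + 1 := by ring
  have hΓ : 0 < Gamma (α / 2 + 1) := Gamma_pos_of_pos (by positivity)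
  have hgap : 0 < d - 2 - α := by linarith
  refine (ENNReal.mul_right_inj (ENNReal.ofReal_pos.2 hΓ).ne' ENNReal.ofReal_ne_top).1 ?_
  have hsubord := fun s (hs : s ∈ Set.Ioi (0 : ℝ)) ↦
    Gamma_mul_lintegral_norm_sub_rpow_mul_heatKernel hd (by positivity : 0 < 2 + α) hs x
  simp only [hhalf, add_sub_cancel_right] at hsubord
  rw [← lintegral_const_mul' _ _ ENNReal.ofReal_ne_top,
    setLIntegral_congr_fun measurableSet_Ioi hsubord,
    lintegral_lintegral_rpow_mul_one_add_mul_rpow_mul_exp (half_pos hα0) (by linarith)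
      (pow_pos hx' 2), sq_rpow_neg_half hx'.le, ← ENNReal.ofReal_mul hΓ.le,
    Gamma_add_one (by positivity)]
  congr 1
  have hden : 2 * ((d : ℝ) / 2 - 1 - α / 2) = d - 2 - α := by ring
  rw [hden]
  field_simp

theorem time_integral_power_bound_general {α : ℝ} (hα0 : 0 < α) (hαd : α < d - 2)
    {x : EuclideanSpace ℝ (Fin d)} (hx : x ≠ 0) (t : ℝ) :
    ∫ s in Set.Ioc 0 t, ∫ y, ‖y - x‖ ^ (-(2 + α)) * heatKernel d s y ≤
      2 / (α * (d - 2 - α)) * ‖x‖ ^ (-α) := by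
  have hbound : 0 ≤ 2 / (α * (d - 2 - α)) * ‖x‖ ^ (-α) :=
    mul_nonneg (div_nonneg zero_le_two (mul_nonneg hα0.le (by linarith))) (by positivity)
  refine (Real.le_norm_self _).trans ((ENNReal.ofReal_le_ofReal_iff hbound).1 ?_)
  rw [ofReal_norm]
  calc ‖∫ s in Set.Ioc 0 t, ∫ y, ‖y - x‖ ^ (-(2 + α)) * heatKernel d s y‖ₑ
      ≤ ∫⁻ s in Set.Ioc 0 t, ∫⁻ y, ‖‖y - x‖ ^ (-(2 + α)) * heatKernel d s y‖ₑ :=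
        (enorm_integral_le_lintegral_enorm _).trans
          (lintegral_mono fun _ ↦ enorm_integral_le_lintegral_enorm _)
    _ ≤ ∫⁻ s in Set.Ioi 0, ∫⁻ y, ‖‖y - x‖ ^ (-(2 + α)) * heatKernel d s y‖ₑ :=
        lintegral_mono_set Set.Ioc_subset_Ioi_self
    _ = ∫⁻ s in Set.Ioi 0, ∫⁻ y, ENNReal.ofReal (‖y - x‖ ^ (-(2 + α)) * heatKernel d s y) :=
        setLIntegral_congr_fun measurableSet_Ioi fun s (hs : 0 < s) ↦ lintegral_congr fun y ↦
          Real.enorm_of_nonneg (mul_nonneg (by positivity) (heatKernel_nonneg hs.le y))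
    _ = _ := lintegral_lintegral_norm_sub_rpow_mul_heatKernel hα0 hαd hx

end HeatKernel

theorem time_integral_power_bound (α : ℝ) (hα0 : 0 < α) (hα1 : α < 1)
    (x : EuclideanSpace ℝ (Fin 3)) (hx : x ≠ 0) (t : ℝ) (ht : 0 < t) :
    (∫ s in Set.Ioc (0 : ℝ) t, ∫ y, ‖y - x‖ ^ (-(2 + α)) * heatKernel 3 s y) ≤
      2 / (α * (1 - α)) * ‖x‖ ^ (-α) := by
  have hdim : ((3 : ℕ) : ℝ) - 2 = 1 := by norm_num
  simpa only [hdim] using time_integral_power_bound_general hα0 (hα1.trans_eq hdim.symm) hx t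
end

section
/- In ℝ³, for any ε > 0 and any points y ≠ x, the Laplacian of the heat-semigroup mollification of the log potential satisfies Δ_y ∫ p_ε(y - z) log|z - x| dz = ∫ p_ε(y - z) |z - x|^{-2} dz; i.e., the Laplacian commutes with the Gaussian convolution of g_x(z) = log|z - x|. -/
open MeasureTheory Real Filter Topology

noncomputable def laplacian (f : EuclideanSpace ℝ (Fin 3) → ℝ)
    (y : EuclideanSpace ℝ (Fin 3)) : ℝ :=
  ∑ i : Fin 3, iteratedFDeriv ℝ 2 f y (fun _ => EuclideanSpace.single i (1 : ℝ))

/-!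
Convolving with a Schwartz function `f` lets every derivative of `log ‖·‖ ⋆ f` fall on `f`.
Instead of excising a ball around the singularity, replace `log ‖z‖` by the smooth function
`log √(‖z‖² + δ)`, which has temperate growth: integrating by parts twice then produces no boundary
terms and moves the Laplacian onto the potential. In dimension `d` the Laplacian of the regularized
potential is `d / (‖z‖² + δ) - 2 ‖z‖² / (‖z‖² + δ)²`. It tends to `(d - 2) ‖z‖⁻²` as `δ → 0` and is
dominated by `(d + 2) ‖z‖⁻²`, which is locally integrable exactly when `d ≥ 3`, so dominated
convergence concludes. For `d = 3` the factor `d - 2` is `1`, and the heat kernel is Schwartz.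
-/

section TemperedIntegrable

variable {E : Type*} [NormedAddCommGroup E] [MeasurableSpace E] {μ : Measure E}

/-- A function is tempered-integrable if it becomes integrable after division by some power of
`1 + ‖z‖`. These are the functions that can be convolved with every Schwartz function. -/
def TemperedIntegrable (g : E → ℝ) (μ : Measure E) : Prop :=
  ∃ k : ℕ, Integrable (fun z => ((1 + ‖z‖) ^ k)⁻¹ * g z) μ

lemma TemperedIntegrable.const_mul {g : E → ℝ} (hg : TemperedIntegrable g μ) (c : ℝ) :
    TemperedIntegrable (fun z => c * g z) μ := by
  obtain ⟨k, hk⟩ := hg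
  exact ⟨k, by simpa only [mul_left_comm] using hk.const_mul c⟩

variable [BorelSpace E]

lemma TemperedIntegrable.aestronglyMeasurable {g : E → ℝ} (hg : TemperedIntegrable g μ) :
    AEStronglyMeasurable g μ := by
  obtain ⟨k, hk⟩ := hg
  have hweight : AEStronglyMeasurable (fun z : E => (1 + ‖z‖) ^ k) μ := by fun_prop
  refine (hweight.mul hk.aestronglyMeasurable).congr (.of_forall fun z => ?_)
  exact mul_inv_cancel_left₀ (by positivity) (g z)

lemma TemperedIntegrable.mono {g h : E → ℝ} (hh : TemperedIntegrable h μ)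
    (hg : AEStronglyMeasurable g μ) (hgh : ∀ᵐ z ∂μ, |g z| ≤ h z) : TemperedIntegrable g μ := by
  obtain ⟨k, hk⟩ := hh
  have hweight : AEStronglyMeasurable (fun z : E => ((1 + ‖z‖) ^ k)⁻¹) μ := by fun_prop
  refine ⟨k, hk.mono' (hweight.mul hg) ?_⟩
  filter_upwards [hgh] with z hz
  rw [norm_mul, Real.norm_of_nonneg (by positivity : 0 ≤ ((1 + ‖z‖) ^ k)⁻¹), Real.norm_eq_abs]
  gcongr

end TemperedIntegrable

section SchwartzConvolution

open ContinuousLinearMap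
open scoped SchwartzMap LineDeriv Convolution

variable {E F : Type*} [NormedAddCommGroup E] [NormedSpace ℝ E]
  [NormedAddCommGroup F] [NormedSpace ℝ F]

lemma exists_norm_schwartzMap_sub_le (f : 𝓢(E, F)) (k : ℕ) (w : E) :
    ∃ C, ∀ v ∈ Metric.ball w 1, ∀ z, ‖f (v - z)‖ ≤ C * ((1 + ‖z‖) ^ k)⁻¹ := by
  obtain ⟨C, hC⟩ : ∃ C, ∀ u, (1 + ‖u‖) ^ k * ‖f u‖ ≤ C := ⟨_, fun u => by
    simpa only [norm_iteratedFDeriv_zero] using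
      f.one_add_le_sup_seminorm_apply (𝕜 := ℝ) (m := (k, 0)) le_rfl le_rfl u⟩
  refine ⟨(2 + ‖w‖) ^ k * C, fun v hv z => ?_⟩
  have hpeetre : 1 + ‖z‖ ≤ (2 + ‖w‖) * (1 + ‖v - z‖) := by
    have hvw : ‖v - w‖ < 1 := mem_ball_iff_norm.mp hv
    have hv' : ‖v‖ ≤ ‖w‖ + ‖v - w‖ := norm_le_norm_add_norm_sub' v w
    have hz : ‖z‖ ≤ ‖v‖ + ‖v - z‖ := norm_le_norm_add_norm_sub v z
    nlinarith [norm_nonneg w, norm_nonneg (v - z)]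
  rw [← div_eq_mul_inv, le_div_iff₀ (by positivity)]
  calc ‖f (v - z)‖ * (1 + ‖z‖) ^ k
      ≤ ‖f (v - z)‖ * ((2 + ‖w‖) * (1 + ‖v - z‖)) ^ k := by gcongr
    _ = (2 + ‖w‖) ^ k * ((1 + ‖v - z‖) ^ k * ‖f (v - z)‖) := by rw [mul_pow]; ring
    _ ≤ (2 + ‖w‖) ^ k * C := by gcongr; exact hC _

variable [MeasurableSpace E] {μ : Measure E}

lemma TemperedIntegrable.exists_integrable_bound {g : E → ℝ} (hg : TemperedIntegrable g μ)
    (f : 𝓢(E, F)) (w : E) :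
    ∃ b : E → ℝ, Integrable b μ ∧ ∀ v ∈ Metric.ball w 1, ∀ z, ‖g z • f (v - z)‖ ≤ b z := by
  obtain ⟨k, hk⟩ := hg
  obtain ⟨C, hC⟩ := exists_norm_schwartzMap_sub_le f k w
  refine ⟨fun z => C * ‖((1 + ‖z‖) ^ k)⁻¹ * g z‖, hk.norm.const_mul C, fun v hv z => ?_⟩
  change ‖g z • f (v - z)‖ ≤ C * ‖((1 + ‖z‖) ^ k)⁻¹ * g z‖
  rw [norm_smul, norm_mul, Real.norm_of_nonneg (by positivity : 0 ≤ ((1 + ‖z‖) ^ k)⁻¹)]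
  calc ‖g z‖ * ‖f (v - z)‖ ≤ ‖g z‖ * (C * ((1 + ‖z‖) ^ k)⁻¹) := by gcongr; exact hC v hv z
    _ = C * (((1 + ‖z‖) ^ k)⁻¹ * ‖g z‖) := by ring

variable [BorelSpace E]

lemma TemperedIntegrable.of_hasTemperateGrowth [μ.HasTemperateGrowth] {u : E → ℝ}
    (hu : u.HasTemperateGrowth) : TemperedIntegrable u μ := by
  obtain ⟨k, C, hC⟩ := hu.2 0
  have hu_meas : AEStronglyMeasurable u μ := hu.1.continuous.aestronglyMeasurable
  refine ⟨k + μ.integrablePower, (μ.integrable_pow_neg_integrablePower.const_mul C).mono'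
    (by fun_prop) (.of_forall fun z => ?_)⟩
  have hz : 0 < 1 + ‖z‖ := by positivity
  rw [norm_mul, Real.norm_of_nonneg (by positivity), Real.rpow_neg hz.le, Real.rpow_natCast]
  calc ((1 + ‖z‖) ^ (k + μ.integrablePower))⁻¹ * ‖u z‖
      ≤ ((1 + ‖z‖) ^ (k + μ.integrablePower))⁻¹ * (C * (1 + ‖z‖) ^ k) := by
        gcongr
        simpa only [norm_iteratedFDeriv_zero] using hC z
    _ = C * ((1 + ‖z‖) ^ μ.integrablePower)⁻¹ := by
        rw [pow_add]
        field_simp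

namespace TemperedIntegrable

variable [SecondCountableTopology E] {g : E → ℝ}

lemma integrable_smul_schwartzMap (hg : TemperedIntegrable g μ) (f : 𝓢(E, F)) (w : E) :
    Integrable (fun z => g z • f (w - z)) μ := by
  obtain ⟨b, hb, hbound⟩ := hg.exists_integrable_bound f w
  exact hb.mono' (hg.aestronglyMeasurable.smul (by fun_prop))
    (.of_forall (hbound w (Metric.mem_ball_self one_pos)))

lemma tendsto_convolution {ι : Type*} {l : Filter ι} [l.IsCountablyGenerated]
    {u : ι → E → ℝ} {h : E → ℝ} (hh : TemperedIntegrable h μ)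
    (hu : ∀ᶠ i in l, AEStronglyMeasurable (u i) μ)
    (hbound : ∀ᶠ i in l, ∀ᵐ z ∂μ, |u i z| ≤ h z)
    (hlim : ∀ᵐ z ∂μ, Tendsto (u · z) l (𝓝 (g z))) (f : 𝓢(E, F)) (w : E) :
    Tendsto (fun i => (u i ⋆[lsmul ℝ ℝ, μ] f : E → F) w) l
      (𝓝 ((g ⋆[lsmul ℝ ℝ, μ] f : E → F) w)) := by
  obtain ⟨b, hb, hfb⟩ := hh.exists_integrable_bound f w
  refine tendsto_integral_filter_of_dominated_convergence b ?_ ?_ hb ?_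
  · filter_upwards [hu] with i hi
    exact hi.smul (by fun_prop)
  · filter_upwards [hbound] with i hi
    filter_upwards [hi] with z hz
    refine le_trans ?_ (hfb w (Metric.mem_ball_self one_pos) z)
    rw [lsmul_apply, norm_smul, norm_smul]
    gcongr
    exact hz.trans (le_abs_self _)
  · filter_upwards [hlim] with z hz
    exact hz.smul_const _

lemma hasFDerivAt_convolution (hg : TemperedIntegrable g μ) (f : 𝓢(E, F)) (w : E) :
    HasFDerivAt (g ⋆[lsmul ℝ ℝ, μ] f : E → F)
      ((g ⋆[lsmul ℝ ℝ, μ] SchwartzMap.fderivCLM ℝ E F f : E → E →L[ℝ] F) w) w := by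
  obtain ⟨b, hb, hbound⟩ := hg.exists_integrable_bound (SchwartzMap.fderivCLM ℝ E F f) w
  refine hasFDerivAt_integral_of_dominated_of_fderiv_le (Metric.ball_mem_nhds w one_pos)
    (.of_forall fun v => (hg.integrable_smul_schwartzMap f v).aestronglyMeasurable)
    (hg.integrable_smul_schwartzMap f w)
    (hg.integrable_smul_schwartzMap _ w).aestronglyMeasurable
    (.of_forall fun z v hv => hbound v hv z) hb (.of_forall fun z v _ => ?_)
  have hshift : HasFDerivAt (fun v => f (v - z)) (fderiv ℝ f (v - z)) v :=
    (hasFDerivAt_comp_sub z).2 f.differentiableAt.hasFDerivAt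
  exact hshift.const_smul (g z)

lemma fderiv_convolution_apply (hg : TemperedIntegrable g μ) (f : 𝓢(E, F)) (w v : E) :
    fderiv ℝ (g ⋆[lsmul ℝ ℝ, μ] f : E → F) w v =
      (g ⋆[lsmul ℝ ℝ, μ] (∂_{v} f : 𝓢(E, F)) : E → F) w := by
  rw [(hg.hasFDerivAt_convolution f w).fderiv]
  exact ContinuousLinearMap.integral_apply
    (hg.integrable_smul_schwartzMap (SchwartzMap.fderivCLM ℝ E F f) w) v

lemma differentiable_fderiv_convolution (hg : TemperedIntegrable g μ) (f : 𝓢(E, F)) :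
    Differentiable ℝ (fderiv ℝ (g ⋆[lsmul ℝ ℝ, μ] f : E → F)) := by
  rw [funext fun w => (hg.hasFDerivAt_convolution f w).fderiv]
  exact fun w => (hg.hasFDerivAt_convolution _ w).differentiableAt

end TemperedIntegrable

end SchwartzConvolution

section LaplacianConvolution

open ContinuousLinearMap
open scoped SchwartzMap LineDeriv Laplacian Convolution

variable {E F : Type*} [NormedAddCommGroup E]

section TemperateGrowth

variable [NormedSpace ℝ E]

lemma hasTemperateGrowth_fderiv [NormedAddCommGroup F] [NormedSpace ℝ F] {u : E → F}
    (hu : u.HasTemperateGrowth) : (fderiv ℝ u).HasTemperateGrowth := by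
  refine ⟨hu.1.fderiv_right (by simp), fun n => ?_⟩
  simpa only [norm_iteratedFDeriv_fderiv] using hu.2 (n + 1)

lemma hasTemperateGrowth_fderiv_apply {u : E → ℝ} (hu : u.HasTemperateGrowth) (v : E) :
    (fun z => fderiv ℝ u z v).HasTemperateGrowth :=
  (ContinuousLinearMap.apply ℝ ℝ v).hasTemperateGrowth.comp (hasTemperateGrowth_fderiv hu)

variable [FiniteDimensional ℝ E] [MeasurableSpace E] [BorelSpace E] {μ : Measure E}
  [μ.IsAddHaarMeasure] [NormedAddCommGroup F] [NormedSpace ℝ F]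

lemma convolution_lineDerivOp {u : E → ℝ} (hu : u.HasTemperateGrowth) (f : 𝓢(E, F)) (v w : E) :
    (u ⋆[lsmul ℝ ℝ, μ] (∂_{v} f : 𝓢(E, F)) : E → F) w =
      ((fun z => fderiv ℝ u z v) ⋆[lsmul ℝ ℝ, μ] f : E → F) w := by
  have hu_int := TemperedIntegrable.of_hasTemperateGrowth (μ := μ) hu
  have hu'_int :=
    TemperedIntegrable.of_hasTemperateGrowth (μ := μ) (hasTemperateGrowth_fderiv_apply hu v)
  have hf (z : E) : HasLineDerivAt ℝ (fun z => f (w - z)) (-(∂_{v} f : 𝓢(E, F)) (w - z)) z v := by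
    have h : HasFDerivAt (fun z => f (w - z)) ((fderiv ℝ f (w - z)).comp (-.id ℝ E)) z :=
      f.differentiableAt.hasFDerivAt.comp z ((hasFDerivAt_id z).const_sub w)
    simpa [SchwartzMap.lineDerivOp_apply_eq_fderiv] using h.hasLineDerivAt v
  have hparts := integral_bilinear_hasLineDerivAt_right_eq_neg_left_of_integrable (μ := μ)
    (B := lsmul ℝ ℝ) (hu'_int.integrable_smul_schwartzMap f w)
    (by simpa using (hu_int.integrable_smul_schwartzMap (∂_{v} f : 𝓢(E, F)) w).neg)
    (hu_int.integrable_smul_schwartzMap f w)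
    (fun z _ => (hu.1.differentiable (by simp) z).hasFDerivAt.hasLineDerivAt v)
    (fun z _ => hf z)
  simpa only [map_neg, integral_neg, neg_inj, convolution_def] using hparts

end TemperateGrowth

variable [InnerProductSpace ℝ E] [FiniteDimensional ℝ E] [NormedAddCommGroup F] [NormedSpace ℝ F]

lemma laplacian_eq_sum_fderiv_fderiv {u : E → F} (hu : Differentiable ℝ (fderiv ℝ u)) (z : E) :
    Δ u z = ∑ i, fderiv ℝ (fun z => fderiv ℝ u z (stdOrthonormalBasis ℝ E i)) z
      (stdOrthonormalBasis ℝ E i) := by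
  rw [InnerProductSpace.laplacian_eq_iteratedFDeriv_stdOrthonormalBasis]
  refine Finset.sum_congr rfl fun i _ => ?_
  rw [fderiv_clm_apply (hu z) (differentiableAt_const _), iteratedFDeriv_two_apply]
  simp

variable [MeasurableSpace E] [BorelSpace E] {μ : Measure E}

lemma TemperedIntegrable.convolution_laplacian {g : E → ℝ} (hg : TemperedIntegrable g μ)
    (f : 𝓢(E, F)) (w : E) :
    (g ⋆[lsmul ℝ ℝ, μ] (Δ f : 𝓢(E, F)) : E → F) w =
      ∑ i, (g ⋆[lsmul ℝ ℝ, μ] (∂_{stdOrthonormalBasis ℝ E i}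
        (∂_{stdOrthonormalBasis ℝ E i} f) : 𝓢(E, F)) : E → F) w := by
  simp only [convolution_lsmul]
  rw [← integral_finsetSum _ fun i _ => hg.integrable_smul_schwartzMap _ w]
  simp only [SchwartzMap.laplacian_eq_sum (stdOrthonormalBasis ℝ E), sum_apply,
    Finset.smul_sum]

lemma TemperedIntegrable.laplacian_convolution {g : E → ℝ} (hg : TemperedIntegrable g μ)
    (f : 𝓢(E, F)) (w : E) :
    Δ (g ⋆[lsmul ℝ ℝ, μ] f : E → F) w = (g ⋆[lsmul ℝ ℝ, μ] (Δ f : 𝓢(E, F)) : E → F) w := by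
  simp only [laplacian_eq_sum_fderiv_fderiv (hg.differentiable_fderiv_convolution f),
    hg.fderiv_convolution_apply, hg.convolution_laplacian]

lemma convolution_laplacian_eq_laplacian_convolution [μ.IsAddHaarMeasure] {u : E → ℝ}
    (hu : u.HasTemperateGrowth) (f : 𝓢(E, F)) (w : E) :
    (u ⋆[lsmul ℝ ℝ, μ] (Δ f : 𝓢(E, F)) : E → F) w = (Δ u ⋆[lsmul ℝ ℝ, μ] f : E → F) w := by
  have hu' (v : E) := hasTemperateGrowth_fderiv_apply hu v
  rw [(TemperedIntegrable.of_hasTemperateGrowth hu).convolution_laplacian]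
  simp only [convolution_lineDerivOp hu, convolution_lineDerivOp (hu' _), convolution_lsmul]
  rw [← integral_finsetSum _ fun i _ => (TemperedIntegrable.of_hasTemperateGrowth
    (hasTemperateGrowth_fderiv_apply (hu' _) _)).integrable_smul_schwartzMap f w]
  simp only [laplacian_eq_sum_fderiv_fderiv
    ((hasTemperateGrowth_fderiv hu).1.differentiable (by simp)), Finset.sum_smul]

end LaplacianConvolution

section RegularizedLog

open scoped Laplacian

variable {E : Type*} [NormedAddCommGroup E] {δ : ℝ}

/-- The smooth approximation `log √(‖z‖² + δ)` of the logarithmic potential `log ‖z‖`, which is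
recovered at `δ = 0`. -/
noncomputable def regularizedLog (δ : ℝ) (z : E) : ℝ :=
  Real.log (‖z‖ ^ 2 + δ) / 2

lemma regularizedLog_zero (z : E) : regularizedLog 0 z = Real.log ‖z‖ := by
  rw [regularizedLog, add_zero, Real.log_pow]
  push_cast
  ring

lemma abs_log_le_add_inv {s : ℝ} (hs : 0 < s) : |Real.log s| ≤ s + s⁻¹ := by
  have hinv : 0 < s⁻¹ := inv_pos.mpr hs
  rw [abs_le]
  constructor
  · linarith [Real.one_sub_inv_le_log_of_pos hs]
  · linarith [Real.log_le_sub_one_of_pos hs]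

lemma abs_regularizedLog_le (hδ : 0 ≤ δ) (hδ1 : δ ≤ 1) {z : E} (hz : z ≠ 0) :
    |regularizedLog δ z| ≤ (1 + ‖z‖) ^ 2 * (‖z‖ ^ 1)⁻¹ := by
  have hz' : 0 < ‖z‖ := norm_pos_iff.mpr hz
  have hlower : Real.log ‖z‖ ≤ regularizedLog δ z := by
    rw [← regularizedLog_zero]
    unfold regularizedLog
    gcongr
  have hupper : regularizedLog δ z ≤ Real.log (1 + ‖z‖) := by
    have h : Real.log (‖z‖ ^ 2 + δ) ≤ Real.log ((1 + ‖z‖) ^ 2) :=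
      Real.log_le_log (by positivity) (by nlinarith)
    rw [Real.log_pow] at h
    push_cast at h
    rw [regularizedLog]
    linarith
  have hbound : (1 + ‖z‖) ^ 2 * (‖z‖ ^ 1)⁻¹ = ‖z‖ + 2 + ‖z‖⁻¹ := by
    field_simp
    ring
  rw [hbound, abs_le]
  have hinv : 0 < ‖z‖⁻¹ := inv_pos.mpr hz'
  constructor
  · linarith [Real.one_sub_inv_le_log_of_pos hz']
  · linarith [Real.log_le_sub_one_of_pos (by positivity : 0 < 1 + ‖z‖)]

lemma tendsto_regularizedLog {z : E} (hz : z ≠ 0) :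
    Tendsto (regularizedLog · z) (𝓝[>] 0) (𝓝 (Real.log ‖z‖)) := by
  have hcont : ContinuousAt (fun δ => Real.log (‖z‖ ^ 2 + δ) / 2) 0 := by
    have : ‖z‖ ^ 2 + 0 ≠ 0 := by positivity
    fun_prop (disch := assumption)
  rw [← regularizedLog_zero]
  exact hcont.tendsto.mono_left nhdsWithin_le_nhds

variable [InnerProductSpace ℝ E]

lemma hasFDerivAt_inv_norm_sq_add (hδ : 0 < δ) (z : E) :
    HasFDerivAt (fun z : E => (‖z‖ ^ 2 + δ)⁻¹)
      ((-2 * ((‖z‖ ^ 2 + δ) ^ 2)⁻¹) • innerSL ℝ z) z := by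
  have h : HasFDerivAt (fun z : E => (‖z‖ ^ 2 + δ)⁻¹) _ z :=
    (hasDerivAt_inv (by positivity : ‖z‖ ^ 2 + δ ≠ 0)).comp_hasFDerivAt z
      ((hasStrictFDerivAt_norm_sq z).hasFDerivAt.add_const δ)
  exact h.congr_fderiv (by module)

lemma hasFDerivAt_regularizedLog (hδ : 0 < δ) (z : E) :
    HasFDerivAt (regularizedLog δ) ((‖z‖ ^ 2 + δ)⁻¹ • innerSL ℝ z) z := by
  have h : HasFDerivAt (regularizedLog δ) _ z :=
    (((hasStrictFDerivAt_norm_sq z).hasFDerivAt.add_const δ).log (by positivity)).mul_const 2⁻¹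
  exact h.congr_fderiv (by module)

lemma hasTemperateGrowth_inv_norm_sq_add (hδ : 0 < δ) :
    (fun z : E => (‖z‖ ^ 2 + δ)⁻¹).HasTemperateGrowth := by
  have hscale : (fun z : E => (‖z‖ ^ 2 + δ)⁻¹) =
      fun z : E => δ⁻¹ * (1 + ‖(√δ)⁻¹ • z‖ ^ 2) ^ (-1 : ℝ) := by
    funext z
    rw [norm_smul, mul_pow, norm_inv, inv_pow, Real.norm_eq_abs, sq_abs, Real.sq_sqrt hδ.le,
      Real.rpow_neg_one, ← mul_inv]
    congr 1
    field_simp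
    ring
  have hrpow := (Function.hasTemperateGrowth_one_add_norm_sq_rpow E (-1)).comp
    (by fun_prop : (fun z : E => (√δ)⁻¹ • z).HasTemperateGrowth)
  rw [hscale]
  exact (Function.HasTemperateGrowth.const δ⁻¹).mul hrpow

lemma hasTemperateGrowth_regularizedLog (hδ : 0 < δ) :
    (regularizedLog δ : E → ℝ).HasTemperateGrowth := by
  refine .of_fderiv ?_ (fun z => (hasFDerivAt_regularizedLog hδ z).differentiableAt)
    (k := 2) (C := 1 + δ + δ⁻¹) fun z => ?_
  · have hfderiv : fderiv ℝ (regularizedLog δ : E → ℝ) =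
        fun z => (‖z‖ ^ 2 + δ)⁻¹ • innerSL ℝ z :=
      funext fun z => (hasFDerivAt_regularizedLog hδ z).fderiv
    rw [hfderiv]
    exact (hasTemperateGrowth_inv_norm_sq_add hδ).smul (innerSL ℝ).hasTemperateGrowth
  · have hlog := abs_log_le_add_inv (by positivity : 0 < ‖z‖ ^ 2 + δ)
    have hinv : (‖z‖ ^ 2 + δ)⁻¹ ≤ δ⁻¹ := by gcongr; linarith [sq_nonneg ‖z‖]
    rw [regularizedLog, norm_div, Real.norm_eq_abs, Real.norm_two]
    calc |Real.log (‖z‖ ^ 2 + δ)| / 2 ≤ (‖z‖ ^ 2 + δ + δ⁻¹) := by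
          linarith [abs_nonneg (Real.log (‖z‖ ^ 2 + δ))]
      _ ≤ (1 + δ + δ⁻¹) * (1 + ‖z‖) ^ 2 := by
          have : 0 < δ⁻¹ := inv_pos.mpr hδ
          nlinarith [norm_nonneg z, mul_nonneg (by positivity : 0 ≤ δ + δ⁻¹)
            (by nlinarith [norm_nonneg z] : 0 ≤ (1 + ‖z‖) ^ 2 - 1)]

variable [FiniteDimensional ℝ E]

lemma laplacian_regularizedLog (hδ : 0 < δ) (z : E) :
    Δ (regularizedLog δ : E → ℝ) z =
      Module.finrank ℝ E / (‖z‖ ^ 2 + δ) - 2 * ‖z‖ ^ 2 / (‖z‖ ^ 2 + δ) ^ 2 := by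
  have hfderiv (v : E) : (fun z => fderiv ℝ (regularizedLog δ) z v) =
      fun z => (‖z‖ ^ 2 + δ)⁻¹ * inner ℝ v z := by
    funext z
    rw [(hasFDerivAt_regularizedLog hδ z).fderiv, real_inner_comm]
    rfl
  have hsecond (v : E) : fderiv ℝ (fun z : E => (‖z‖ ^ 2 + δ)⁻¹ * inner ℝ v z) z v =
      ‖v‖ ^ 2 / (‖z‖ ^ 2 + δ) - 2 * inner ℝ v z ^ 2 / (‖z‖ ^ 2 + δ) ^ 2 := by
    have hinner : HasFDerivAt (fun z : E => inner ℝ v z) (innerSL ℝ v) z :=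
      (innerSL ℝ v).hasFDerivAt
    rw [((hasFDerivAt_inv_norm_sq_add hδ z).fun_mul hinner).fderiv]
    simp [real_inner_comm v z]
    ring
  rw [laplacian_eq_sum_fderiv_fderiv
    ((hasTemperateGrowth_fderiv (hasTemperateGrowth_regularizedLog hδ)).1.differentiable (by simp))]
  simp only [hfderiv, hsecond, OrthonormalBasis.norm_eq_one, Finset.sum_sub_distrib,
    ← Finset.sum_div, ← Finset.mul_sum, OrthonormalBasis.sum_sq_inner_right]
  simp

lemma abs_laplacian_regularizedLog_le (hδ : 0 < δ) {z : E} (hz : z ≠ 0) :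
    |Δ (regularizedLog δ : E → ℝ) z| ≤ (Module.finrank ℝ E + 2) * (‖z‖ ^ 2)⁻¹ := by
  have hz' : 0 < ‖z‖ ^ 2 := by positivity
  have hfirst : Module.finrank ℝ E / (‖z‖ ^ 2 + δ) ≤ Module.finrank ℝ E * (‖z‖ ^ 2)⁻¹ := by
    rw [div_eq_mul_inv]
    gcongr
    linarith
  have hsecond : 2 * ‖z‖ ^ 2 / (‖z‖ ^ 2 + δ) ^ 2 ≤ 2 * (‖z‖ ^ 2)⁻¹ := by
    rw [← div_eq_mul_inv, div_le_div_iff₀ (by positivity) hz']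
    nlinarith [mul_pos hz' hδ, sq_nonneg δ]
  rw [laplacian_regularizedLog hδ]
  calc |Module.finrank ℝ E / (‖z‖ ^ 2 + δ) - 2 * ‖z‖ ^ 2 / (‖z‖ ^ 2 + δ) ^ 2|
      ≤ |Module.finrank ℝ E / (‖z‖ ^ 2 + δ)| + |2 * ‖z‖ ^ 2 / (‖z‖ ^ 2 + δ) ^ 2| := abs_sub _ _
    _ = Module.finrank ℝ E / (‖z‖ ^ 2 + δ) + 2 * ‖z‖ ^ 2 / (‖z‖ ^ 2 + δ) ^ 2 := by
        rw [abs_of_nonneg (by positivity), abs_of_nonneg (by positivity)]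
    _ ≤ (Module.finrank ℝ E + 2) * (‖z‖ ^ 2)⁻¹ := by linarith

lemma tendsto_laplacian_regularizedLog {z : E} (hz : z ≠ 0) :
    Tendsto (fun δ => Δ (regularizedLog δ : E → ℝ) z) (𝓝[>] 0)
      (𝓝 ((Module.finrank ℝ E - 2) * (‖z‖ ^ 2)⁻¹)) := by
  have hcont : ContinuousAt (fun δ => Module.finrank ℝ E / (‖z‖ ^ 2 + δ) -
      2 * ‖z‖ ^ 2 / (‖z‖ ^ 2 + δ) ^ 2) 0 := by
    have hz' : ‖z‖ ^ 2 + 0 ≠ 0 := by positivity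
    have hz'' : (‖z‖ ^ 2 + 0) ^ 2 ≠ 0 := by positivity
    fun_prop (disch := assumption)
  have hlim : (Module.finrank ℝ E - 2) * (‖z‖ ^ 2)⁻¹ = Module.finrank ℝ E / (‖z‖ ^ 2 + 0) -
      2 * ‖z‖ ^ 2 / (‖z‖ ^ 2 + 0) ^ 2 := by
    field_simp
    ring
  rw [hlim]
  refine (hcont.tendsto.mono_left nhdsWithin_le_nhds).congr' ?_
  filter_upwards [self_mem_nhdsWithin] with δ hδ
  exact (laplacian_regularizedLog hδ z).symm

end RegularizedLog

section LogPotential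

open ContinuousLinearMap
open scoped SchwartzMap Laplacian Convolution

variable {E F : Type*} [NormedAddCommGroup E] [MeasurableSpace E] [BorelSpace E] {μ : Measure E}
  [μ.IsAddHaarMeasure]

lemma temperedIntegrable_pow_mul_inv_norm_pow [NormedSpace ℝ E] [FiniteDimensional ℝ E] {k : ℕ}
    (hk : k < Module.finrank ℝ E) (m : ℕ) :
    TemperedIntegrable (fun z : E => (1 + ‖z‖) ^ m * (‖z‖ ^ k)⁻¹) μ := by
  have : Nontrivial E := Module.nontrivial_of_finrank_pos (R := ℝ) (by lia)
  obtain ⟨j, hj⟩ : ∃ j, Module.finrank ℝ E - 1 = k + j := ⟨Module.finrank ℝ E - 1 - k, by lia⟩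
  refine ⟨m + (j + 2), ?_⟩
  have hradial : (fun z : E => ((1 + ‖z‖) ^ (m + (j + 2)))⁻¹ * ((1 + ‖z‖) ^ m * (‖z‖ ^ k)⁻¹)) =
      fun z => (fun r : ℝ => ((1 + r) ^ (j + 2))⁻¹ * (r ^ k)⁻¹) ‖z‖ := by
    funext z
    rw [pow_add _ m]
    field_simp
  have hdecay : IntegrableOn (fun r : ℝ => (1 + ‖r‖) ^ (-2 : ℝ)) (Set.Ioi 0) :=
    (integrable_one_add_norm (by simp)).integrableOn
  rw [hradial, integrable_fun_norm_addHaar μ (f := fun r => ((1 + r) ^ (j + 2))⁻¹ * (r ^ k)⁻¹), hj]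
  refine hdecay.mono' (by fun_prop) ((ae_restrict_mem measurableSet_Ioi).mono fun r hr => ?_)
  have hr' : 0 < r := hr
  rw [norm_smul, Real.norm_of_nonneg hr'.le, Real.norm_of_nonneg (by positivity),
    Real.norm_of_nonneg (by positivity), Real.rpow_neg (by positivity), Real.rpow_two]
  calc r ^ (k + j) * (((1 + r) ^ (j + 2))⁻¹ * (r ^ k)⁻¹)
      = (r / (1 + r)) ^ j * ((1 + r) ^ 2)⁻¹ := by
        rw [div_pow]
        field_simp
        ring
    _ ≤ 1 ^ j * ((1 + r) ^ 2)⁻¹ := by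
        gcongr
        exact (div_le_one (by positivity)).mpr (by linarith)
    _ = ((1 + r) ^ 2)⁻¹ := by rw [one_pow, one_mul]

variable [InnerProductSpace ℝ E] [FiniteDimensional ℝ E]
  [NormedAddCommGroup F] [NormedSpace ℝ F]

lemma temperedIntegrable_log_norm (hE : 1 < Module.finrank ℝ E) :
    TemperedIntegrable (fun z : E => Real.log ‖z‖) μ := by
  have : Nontrivial E := Module.nontrivial_of_finrank_pos (R := ℝ) (by lia)
  refine (temperedIntegrable_pow_mul_inv_norm_pow hE 2).mono
    (Real.measurable_log.comp measurable_norm).aestronglyMeasurable ?_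
  filter_upwards [μ.ae_ne 0] with z hz
  rw [← regularizedLog_zero]
  exact abs_regularizedLog_le le_rfl zero_le_one hz

lemma tendsto_regularizedLog_convolution (hE : 1 < Module.finrank ℝ E) (f : 𝓢(E, F)) (w : E) :
    Tendsto (fun δ => (regularizedLog δ ⋆[lsmul ℝ ℝ, μ] f : E → F) w) (𝓝[>] 0)
      (𝓝 (((fun z => Real.log ‖z‖) ⋆[lsmul ℝ ℝ, μ] f : E → F) w)) := by
  have : Nontrivial E := Module.nontrivial_of_finrank_pos (R := ℝ) (by lia)
  refine (temperedIntegrable_pow_mul_inv_norm_pow hE 2).tendsto_convolution ?_ ?_ ?_ f w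
  · filter_upwards [self_mem_nhdsWithin] with δ hδ
    exact (hasTemperateGrowth_regularizedLog hδ).1.continuous.aestronglyMeasurable
  · filter_upwards [Ioc_mem_nhdsGT one_pos] with δ hδ
    filter_upwards [μ.ae_ne 0] with z hz using abs_regularizedLog_le hδ.1.le hδ.2 hz
  · filter_upwards [μ.ae_ne 0] with z hz using tendsto_regularizedLog hz

lemma tendsto_laplacian_regularizedLog_convolution (hE : 2 < Module.finrank ℝ E)
    (f : 𝓢(E, F)) (w : E) :
    Tendsto (fun δ => (Δ (regularizedLog δ : E → ℝ) ⋆[lsmul ℝ ℝ, μ] f : E → F) w) (𝓝[>] 0)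
      (𝓝 (((fun z => (Module.finrank ℝ E - 2) * (‖z‖ ^ 2)⁻¹) ⋆[lsmul ℝ ℝ, μ] f : E → F) w)) := by
  have : Nontrivial E := Module.nontrivial_of_finrank_pos (R := ℝ) (by lia)
  have hdom := (temperedIntegrable_pow_mul_inv_norm_pow (μ := μ) hE 0).const_mul
    (Module.finrank ℝ E + 2)
  refine hdom.tendsto_convolution ?_ ?_ ?_ f w
  · filter_upwards [self_mem_nhdsWithin] with δ hδ
    rw [funext (laplacian_regularizedLog hδ)]
    exact Measurable.aestronglyMeasurable (by fun_prop)
  · filter_upwards [self_mem_nhdsWithin] with δ hδ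
    filter_upwards [μ.ae_ne 0] with z hz
    simpa using abs_laplacian_regularizedLog_le hδ hz
  · filter_upwards [μ.ae_ne 0] with z hz using tendsto_laplacian_regularizedLog hz

theorem laplacian_log_norm_convolution (hE : 2 < Module.finrank ℝ E) (f : 𝓢(E, F)) (w : E) :
    Δ ((fun z => Real.log ‖z‖) ⋆[lsmul ℝ ℝ, μ] f : E → F) w =
      ((fun z => (Module.finrank ℝ E - 2) * (‖z‖ ^ 2)⁻¹) ⋆[lsmul ℝ ℝ, μ] f : E → F) w := by
  rw [(temperedIntegrable_log_norm (by lia)).laplacian_convolution]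
  refine tendsto_nhds_unique (tendsto_regularizedLog_convolution (by lia) (Δ f : 𝓢(E, F)) w)
    ((tendsto_laplacian_regularizedLog_convolution hE f w).congr' ?_)
  filter_upwards [self_mem_nhdsWithin] with δ hδ
  exact (convolution_laplacian_eq_laplacian_convolution
    (hasTemperateGrowth_regularizedLog hδ) f w).symm

end LogPotential

section Translation

open ContinuousLinearMap
open scoped SchwartzMap Laplacian Convolution

variable {E : Type*} [NormedAddCommGroup E]

lemma integral_mul_comp_sub_eq_convolution [MeasurableSpace E] [BorelSpace E]
    {μ : Measure E} [μ.IsAddRightInvariant] (f g : E → ℝ) (x w : E) :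
    ∫ z, f (w - z) * g (z - x) ∂μ = (g ⋆[lsmul ℝ ℝ, μ] f) (w - x) := by
  rw [convolution_lsmul, ← integral_sub_right_eq_self (fun z => g z • f (w - x - z)) x]
  simp only [sub_sub_sub_cancel_right, smul_eq_mul, mul_comm]

variable [InnerProductSpace ℝ E] [FiniteDimensional ℝ E]

lemma laplacian_comp_sub {F : Type*} [NormedAddCommGroup F] [NormedSpace ℝ F] (u : E → F)
    (x y : E) : Δ (fun w => u (w - x)) y = Δ u (y - x) := by
  simp only [InnerProductSpace.laplacian_eq_iteratedFDeriv_stdOrthonormalBasis,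
    iteratedFDeriv_comp_sub]

variable [MeasurableSpace E] [BorelSpace E] {μ : Measure E} [μ.IsAddHaarMeasure]

theorem laplacian_commutes_mollification_general (hE : 2 < Module.finrank ℝ E) (f : 𝓢(E, ℝ))
    (x y : E) :
    Δ (fun w => ∫ z, f (w - z) * Real.log ‖z - x‖ ∂μ) y =
      (Module.finrank ℝ E - 2) * ∫ z, f (y - z) * ‖z - x‖ ^ (-2 : ℝ) ∂μ := by
  have hlog (w : E) := integral_mul_comp_sub_eq_convolution (μ := μ) f (Real.log ‖·‖) x w
  have hpow (z : E) : ‖z‖ ^ (-2 : ℝ) = (‖z‖ ^ 2)⁻¹ := by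
    rw [Real.rpow_neg (norm_nonneg z), Real.rpow_two]
  calc Δ (fun w => ∫ z, f (w - z) * Real.log ‖z - x‖ ∂μ) y
      = Δ ((Real.log ‖·‖) ⋆[lsmul ℝ ℝ, μ] f : E → ℝ) (y - x) := by
        simp only [hlog, laplacian_comp_sub]
    _ = ((fun z => (Module.finrank ℝ E - 2) * (‖z‖ ^ 2)⁻¹) ⋆[lsmul ℝ ℝ, μ] f : E → ℝ) (y - x) :=
        laplacian_log_norm_convolution hE f (y - x)
    _ = ∫ z, f (y - z) * ((Module.finrank ℝ E - 2) * (‖z - x‖ ^ 2)⁻¹) ∂μ :=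
        (integral_mul_comp_sub_eq_convolution f _ x y).symm
    _ = (Module.finrank ℝ E - 2) * ∫ z, f (y - z) * ‖z - x‖ ^ (-2 : ℝ) ∂μ := by
        simp only [hpow, mul_left_comm (f _), integral_const_mul]

end Translation

section Gaussian

open scoped SchwartzMap

variable {E : Type*} [NormedAddCommGroup E]

lemma exists_norm_iteratedFDeriv_exp_comp_le [NormedSpace ℝ E] {q : E → ℝ}
    (hq : q.HasTemperateGrowth) (n : ℕ) :
    ∃ C m, ∀ u, ‖iteratedFDeriv ℝ n (fun u => Real.exp (q u)) u‖ ≤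
      C * (1 + ‖u‖) ^ (m : ℕ) * Real.exp (q u) := by
  obtain ⟨l, A, hA, hqA⟩ := hq.norm_iteratedFDeriv_le_uniform n
  refine ⟨n.factorial * (1 + A) ^ n, l * n, fun u => ?_⟩
  have hexp (i : ℕ) : ‖iteratedFDeriv ℝ i Real.exp (q u)‖ ≤ Real.exp (q u) := by
    rw [norm_iteratedFDeriv_eq_norm_iteratedDeriv, iteratedDeriv_eq_iterate, Real.iter_deriv_exp,
      Real.norm_of_nonneg (Real.exp_nonneg _)]
  have hD : 1 ≤ (1 + A) * (1 + ‖u‖) ^ l :=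
    one_le_mul_of_one_le_of_one_le (by linarith)
      (one_le_pow₀ (by linarith [norm_nonneg u]))
  have hq_deriv (i : ℕ) (hi : 1 ≤ i) (hin : i ≤ n) :
      ‖iteratedFDeriv ℝ i q u‖ ≤ ((1 + A) * (1 + ‖u‖) ^ l) ^ i :=
    calc ‖iteratedFDeriv ℝ i q u‖ ≤ A * (1 + ‖u‖) ^ l := hqA i hin u
      _ ≤ (1 + A) * (1 + ‖u‖) ^ l := by gcongr; linarith
      _ ≤ ((1 + A) * (1 + ‖u‖) ^ l) ^ i := le_self_pow₀ hD (by lia)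
  calc ‖iteratedFDeriv ℝ n (Real.exp ∘ q) u‖
      ≤ n.factorial * Real.exp (q u) * ((1 + A) * (1 + ‖u‖) ^ l) ^ n :=
        norm_iteratedFDeriv_comp_le Real.contDiff_exp hq.1 (by exact_mod_cast le_top) u
          (fun i _ => hexp i) hq_deriv
    _ = n.factorial * (1 + A) ^ n * (1 + ‖u‖) ^ (l * n) * Real.exp (q u) := by
        rw [mul_pow, ← pow_mul]
        ring

lemma one_add_pow_mul_exp_neg_mul_sq_le {b r : ℝ} (hb : 0 < b) (hr : 0 ≤ r) (m : ℕ) :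
    (1 + r) ^ m * Real.exp (-b * r ^ 2) ≤ m.factorial * (2 / b) ^ m * Real.exp b := by
  have hpow : (1 + r) ^ m ≤ m.factorial * (2 / b) ^ m * Real.exp (b + b * r ^ 2) :=
    calc (1 + r) ^ m ≤ ((1 + r) ^ 2) ^ m := by gcongr; nlinarith
      _ = m.factorial * (2 / b) ^ m * ((b / 2 * (1 + r) ^ 2) ^ m / m.factorial) := by
        rw [mul_pow (b / 2), ← inv_div b 2, inv_pow]
        field_simp
      _ ≤ m.factorial * (2 / b) ^ m * Real.exp (b / 2 * (1 + r) ^ 2) := by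
        gcongr
        exact Real.pow_div_factorial_le_exp _ (by positivity) m
      _ ≤ m.factorial * (2 / b) ^ m * Real.exp (b + b * r ^ 2) := by
        gcongr
        nlinarith [mul_nonneg hb.le (sq_nonneg (1 - r))]
  calc (1 + r) ^ m * Real.exp (-b * r ^ 2)
      ≤ m.factorial * (2 / b) ^ m * Real.exp (b + b * r ^ 2) * Real.exp (-b * r ^ 2) := by gcongr
    _ = m.factorial * (2 / b) ^ m * Real.exp b := by
        rw [mul_assoc, ← Real.exp_add]
        congr 2
        ring

/-- The Gaussian `exp (-b ‖u‖²)` as a Schwartz function. -/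
noncomputable def gaussianSchwartz (E : Type*) [NormedAddCommGroup E] [InnerProductSpace ℝ E]
    {b : ℝ} (hb : 0 < b) : 𝓢(E, ℝ) where
  toFun u := Real.exp (-b * ‖u‖ ^ 2)
  smooth' := Real.contDiff_exp.comp (contDiff_const.mul (contDiff_norm_sq ℝ))
  decay' k n := by
    have hq : (fun u : E => -b * ‖u‖ ^ 2).HasTemperateGrowth := by fun_prop
    obtain ⟨C, m, hC⟩ := exists_norm_iteratedFDeriv_exp_comp_le hq n
    have hC0 : 0 ≤ C := by
      simpa using (norm_nonneg _).trans (hC 0)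
    refine ⟨C * ((k + m).factorial * (2 / b) ^ (k + m) * Real.exp b), fun u => ?_⟩
    calc ‖u‖ ^ k * ‖iteratedFDeriv ℝ n (fun u => Real.exp (-b * ‖u‖ ^ 2)) u‖
        ≤ (1 + ‖u‖) ^ k * (C * (1 + ‖u‖) ^ m * Real.exp (-b * ‖u‖ ^ 2)) := by
          gcongr
          · linarith
          · exact hC u
      _ = C * ((1 + ‖u‖) ^ (k + m) * Real.exp (-b * ‖u‖ ^ 2)) := by ring
      _ ≤ C * ((k + m).factorial * (2 / b) ^ (k + m) * Real.exp b) :=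
          mul_le_mul_of_nonneg_left
            (one_add_pow_mul_exp_neg_mul_sq_le hb (norm_nonneg u) (k + m)) hC0

/-- The heat kernel at a positive time as a Schwartz function. -/
noncomputable def heatKernelSchwartz (d : ℕ) {t : ℝ} (ht : 0 < t) :
    𝓢(EuclideanSpace ℝ (Fin d), ℝ) :=
  (2 * Real.pi * t) ^ (-(d : ℝ) / 2) • gaussianSchwartz _ (by positivity : 0 < (2 * t)⁻¹)

lemma heatKernelSchwartz_apply (d : ℕ) {t : ℝ} (ht : 0 < t) (u : EuclideanSpace ℝ (Fin d)) :
    heatKernelSchwartz d ht u = heatKernel d t u := by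
  change (2 * Real.pi * t) ^ (-(d : ℝ) / 2) * Real.exp (-(2 * t)⁻¹ * ‖u‖ ^ 2) = _
  rw [heatKernel, neg_mul, inv_mul_eq_div, ← neg_div]

end Gaussian

open scoped Laplacian in
lemma laplacian_eq_innerProductSpace_laplacian (f : EuclideanSpace ℝ (Fin 3) → ℝ)
    (y : EuclideanSpace ℝ (Fin 3)) : laplacian f y = Δ f y := by
  rw [InnerProductSpace.laplacian_eq_iteratedFDeriv_orthonormalBasis f
    (EuclideanSpace.basisFun (Fin 3) ℝ)]
  refine Finset.sum_congr rfl fun i _ => congrArg _ (funext fun j => ?_)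
  fin_cases j <;> simp

theorem laplacian_commutes_mollification (ε : ℝ) (hε : 0 < ε)
    (x y : EuclideanSpace ℝ (Fin 3)) (hxy : y ≠ x) :
    laplacian (fun w => ∫ z, heatKernel 3 ε (w - z) * Real.log ‖z - x‖) y =
      ∫ z, heatKernel 3 ε (y - z) * ‖z - x‖ ^ (-2 : ℝ) := by
  rw [laplacian_eq_innerProductSpace_laplacian]
  simp only [← heatKernelSchwartz_apply 3 hε]
  rw [laplacian_commutes_mollification_general (by simp)]
  norm_num
end

section
/- There exists a constant C > 0 such that for all y ≠ x in ℝ³ and all 0 < ε < 1, ∫ p_ε(y - z) | log|z - x| − log|y - x| | dz ≤ C |y - x|^{-1/2} ε^{1/4}, where p_ε is the 3-dimensional heat kernel. -/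
open MeasureTheory Real Filter Topology

/-!
The logarithm is Hölder away from the origin,
`|log u - log v| ≤ |u - v| ^ α * (u ^ (-α) + v ^ (-α)) / α`, and the factor `‖w‖ ^ α` produced by
`|‖a - w‖ - ‖a‖| ≤ ‖w‖` is absorbed by the Gaussian at the cost of doubling the time:
`‖w‖ ^ α * p_t w ≤ C * t ^ (α / 2) * p_{2t} w`. What remains is the potential
`∫ w, p_{2t} w * ‖a - w‖ ^ (-α)`, which is at most `C * ‖a‖ ^ (-α)` uniformly in `t`: away from
`a` because `p_{2t}` has mass one, and on the ball of radius `‖a‖ / 2` around `a` because there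
`p_{2t} w ≤ C * ‖w‖ ^ (-d)`.
-/

section LogModulus

variable {u v α : ℝ}

lemma log_sub_log_le_rpow (hv : 0 < v) (hvu : v ≤ u) (hα : 0 < α) (hα₁ : α ≤ 1) :
    log u - log v ≤ (u - v) ^ α * v ^ (-α) / α := by
  have hu : 0 < u := hv.trans_le hvu
  have hδ : 0 ≤ (u - v) / v := div_nonneg (sub_nonneg.2 hvu) hv.le
  rw [le_div_iff₀ hα]
  calc (log u - log v) * α = log ((u / v) ^ α) := by
        rw [log_rpow (div_pos hu hv), log_div hu.ne' hv.ne', mul_comm]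
    _ ≤ (u / v) ^ α - 1 := log_le_sub_one_of_pos (rpow_pos_of_pos (div_pos hu hv) α)
    _ = ((u - v) / v + 1) ^ α - 1 := by rw [sub_div, div_self hv.ne', sub_add_cancel]
    _ ≤ ((u - v) / v) ^ α := by
        simpa using rpow_add_le_add_rpow hδ zero_le_one hα.le hα₁
    _ = (u - v) ^ α * v ^ (-α) := by
        rw [div_rpow (sub_nonneg.2 hvu) hv.le, rpow_neg hv.le, div_eq_mul_inv]

lemma abs_log_sub_log_le_rpow (hu : 0 < u) (hv : 0 < v) (hα : 0 < α) (hα₁ : α ≤ 1) :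
    |log u - log v| ≤ |u - v| ^ α * (u ^ (-α) + v ^ (-α)) / α := by
  wlog hvu : v ≤ u generalizing u v
  · rw [abs_sub_comm, abs_sub_comm u, add_comm]
    exact this hv hu (le_of_not_ge hvu)
  rw [abs_of_nonneg (sub_nonneg.2 (log_le_log hv hvu)), abs_of_nonneg (sub_nonneg.2 hvu)]
  calc log u - log v ≤ (u - v) ^ α * v ^ (-α) / α := log_sub_log_le_rpow hv hvu hα hα₁
    _ ≤ (u - v) ^ α * (u ^ (-α) + v ^ (-α)) / α := by
        have : 0 ≤ u - v := sub_nonneg.2 hvu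
        gcongr
        exact le_add_of_nonneg_left (rpow_nonneg hu.le _)

lemma abs_log_norm_sub_sub_log_norm_le {E : Type*} [NormedAddCommGroup E] {a w : E} (ha : a ≠ 0)
    (hw : w ≠ a) (hα : 0 < α) (hα₁ : α ≤ 1) :
    |log ‖a - w‖ - log ‖a‖| ≤ ‖w‖ ^ α * (‖a - w‖ ^ (-α) + ‖a‖ ^ (-α)) / α := by
  have h_norm : |‖a - w‖ - ‖a‖| ≤ ‖w‖ := by simpa using abs_norm_sub_norm_le (a - w) a
  refine (abs_log_sub_log_le_rpow (norm_pos_iff.2 (sub_ne_zero.2 hw.symm)) (norm_pos_iff.2 ha)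
    hα hα₁).trans ?_
  gcongr

end LogModulus

section Potential

variable {E : Type*} [NormedAddCommGroup E]

lemma mul_norm_sub_rpow_neg_le {f : E → ℝ} {a : E} {r M α : ℝ} (hf : 0 ≤ f) (hα : 0 ≤ α)
    (hr : 0 < r) (hM : ∀ w ∈ Metric.ball a r, f w ≤ M) (w : E) :
    f w * ‖a - w‖ ^ (-α) ≤ r ^ (-α) * f w +
      M * (Metric.ball 0 r).indicator (fun z : E ↦ ‖z‖ ^ (-α)) (a - w) := by
  have hfw : 0 ≤ f w := hf w
  by_cases hw : ‖a - w‖ < r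
  · rw [Set.indicator_of_mem (mem_ball_zero_iff.2 hw)]
    have hfM : f w ≤ M := hM w (by rwa [mem_ball_iff_norm'])
    calc f w * ‖a - w‖ ^ (-α) ≤ M * ‖a - w‖ ^ (-α) := by gcongr
      _ ≤ r ^ (-α) * f w + M * ‖a - w‖ ^ (-α) := le_add_of_nonneg_left (by positivity)
  · rw [Set.indicator_of_notMem (by simpa using hw), mul_zero, add_zero, mul_comm]
    exact mul_le_mul_of_nonneg_right
      (rpow_le_rpow_of_nonpos hr (not_lt.1 hw) (neg_nonpos.2 hα)) hfw

variable [NormedSpace ℝ E] [FiniteDimensional ℝ E] [MeasurableSpace E] [BorelSpace E]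
  {μ : Measure E} [μ.IsAddHaarMeasure]

lemma setIntegral_ball_norm_rpow (p : ℝ) {r : ℝ} (hr : 0 < r) :
    ∫ z in Metric.ball (0 : E) r, ‖z‖ ^ p ∂μ =
      r ^ (Module.finrank ℝ E + p) * ∫ z in Metric.ball (0 : E) 1, ‖z‖ ^ p ∂μ := by
  have h_scale := Measure.setIntegral_comp_smul_of_pos μ (fun z : E ↦ ‖z‖ ^ p)
    (Metric.ball 0 1) hr
  rw [smul_unitBall_of_pos hr, eq_inv_smul_iff₀ (pow_pos hr _).ne'] at h_scale
  simp_rw [norm_smul, norm_of_nonneg hr.le, mul_rpow hr.le (norm_nonneg _)] at h_scale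
  rw [← h_scale, integral_const_mul, smul_eq_mul, rpow_add hr, rpow_natCast, mul_assoc]

variable {f : E → ℝ} {a : E} {r M α : ℝ}

lemma integrableOn_ball_norm_rpow_neg (hα : 0 ≤ α) (hαd : α < Module.finrank ℝ E) :
    IntegrableOn (fun z : E ↦ ‖z‖ ^ (-α)) (Metric.ball 0 r) μ := by
  refine integrableOn_ball_of_norm_le_rpow (C := 1) (α := α) ?_ hαd (ae_of_all _ fun z ↦ ?_)
    (by fun_prop : Measurable _).aestronglyMeasurable
  · exact Nat.one_le_iff_ne_zero.2 fun h ↦ by simp_all [hα.not_gt]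
  · rw [one_mul, norm_of_nonneg (rpow_nonneg (norm_nonneg z) _)]

lemma integrable_norm_sub_rpow_neg_majorant (hfi : Integrable f μ) (hα : 0 ≤ α)
    (hαd : α < Module.finrank ℝ E) :
    Integrable (fun w ↦ r ^ (-α) * f w +
      M * (Metric.ball 0 r).indicator (fun z : E ↦ ‖z‖ ^ (-α)) (a - w)) μ :=
  (hfi.const_mul _).add <| Integrable.const_mul (Integrable.comp_sub_left
    ((integrableOn_ball_norm_rpow_neg hα hαd).integrable_indicator measurableSet_ball) a) M

lemma integrable_mul_norm_sub_rpow_neg (hf : 0 ≤ f) (hfi : Integrable f μ) (hα : 0 ≤ α)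
    (hαd : α < Module.finrank ℝ E) (hr : 0 < r) (hM : ∀ w ∈ Metric.ball a r, f w ≤ M) :
    Integrable (fun w ↦ f w * ‖a - w‖ ^ (-α)) μ := by
  refine (integrable_norm_sub_rpow_neg_majorant (r := r) (M := M) (a := a) hfi hα hαd).mono'
    (hfi.aestronglyMeasurable.mul (by fun_prop : Measurable _).aestronglyMeasurable)
    (ae_of_all _ fun w ↦ ?_)
  rw [norm_of_nonneg (mul_nonneg (hf w) (rpow_nonneg (norm_nonneg _) _))]
  exact mul_norm_sub_rpow_neg_le hf hα hr hM w

lemma integral_mul_norm_sub_rpow_neg_le (hf : 0 ≤ f) (hfi : Integrable f μ) (hα : 0 ≤ α)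
    (hαd : α < Module.finrank ℝ E) (hr : 0 < r) (hM : ∀ w ∈ Metric.ball a r, f w ≤ M) :
    ∫ w, f w * ‖a - w‖ ^ (-α) ∂μ ≤ r ^ (-α) * ∫ w, f w ∂μ +
      M * (r ^ (Module.finrank ℝ E - α) * ∫ z in Metric.ball (0 : E) 1, ‖z‖ ^ (-α) ∂μ) := by
  have h_ball : Integrable ((Metric.ball 0 r).indicator (fun z : E ↦ ‖z‖ ^ (-α))) μ :=
    (integrableOn_ball_norm_rpow_neg hα hαd).integrable_indicator measurableSet_ball
  refine (integral_mono (integrable_mul_norm_sub_rpow_neg hf hfi hα hαd hr hM)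
    (integrable_norm_sub_rpow_neg_majorant hfi hα hαd)
    (mul_norm_sub_rpow_neg_le hf hα hr hM)).trans_eq ?_
  rw [integral_add (hfi.const_mul _) ((h_ball.comp_sub_left a).const_mul _), integral_const_mul,
    integral_const_mul, integral_sub_left_eq_self _ μ a, integral_indicator measurableSet_ball,
    setIntegral_ball_norm_rpow _ hr, sub_eq_add_neg]

end Potential

section HeatKernel

variable {d : ℕ} {t α : ℝ}

lemma heatKernel_nonneg_s19 (ht : 0 ≤ t) : 0 ≤ heatKernel d t := fun w ↦ by
  unfold heatKernel
  positivity

@[fun_prop]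
lemma continuous_heatKernel : Continuous (heatKernel d t) := by
  unfold heatKernel
  fun_prop

lemma integral_heatKernel (ht : 0 < t) : ∫ w, heatKernel d t w = 1 := by
  have h_gauss : ∫ w : EuclideanSpace ℝ (Fin d), exp (-‖w‖ ^ 2 / (2 * t)) =
      (2 * π * t) ^ ((d : ℝ) / 2) := by
    have h := GaussianFourier.integral_rexp_neg_mul_sq_norm (V := EuclideanSpace ℝ (Fin d))
      (b := 1 / (2 * t)) (by positivity)
    rw [finrank_euclideanSpace_fin] at h
    convert h using 3 <;> field_simp
  simp only [heatKernel]
  rw [integral_const_mul, h_gauss, ← rpow_add (by positivity), neg_div, neg_add_cancel, rpow_zero]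

lemma integrable_heatKernel (ht : 0 < t) : Integrable (heatKernel d t) :=
  .of_integral_ne_zero <| integral_heatKernel (d := d) ht ▸ one_ne_zero

lemma rpow_mul_exp_neg_sq_div_le {r q : ℝ} (hr : 0 ≤ r) (hq : 0 ≤ q) (ht : 0 < t) :
    r ^ q * exp (-r ^ 2 / (2 * t)) ≤ (q * t) ^ (q / 2) := by
  have h : (r ^ 2) ^ (q / 2) ≤ (q * t) ^ (q / 2) * exp (r ^ 2 / (2 * t)) := by
    convert ProbabilityTheory.rpow_abs_le_mul_exp_abs (r ^ 2) (t := 1 / (2 * t))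
      (div_nonneg hq zero_le_two) (by positivity) using 2
    · rw [abs_of_nonneg (sq_nonneg r)]
    · rw [abs_of_nonneg (by positivity)]
      field_simp
    · rw [abs_of_nonneg (by positivity), abs_of_nonneg (sq_nonneg r), one_div_mul_eq_div]
  have h_sq : (r ^ 2) ^ (q / 2) = r ^ q := by
    rw [← rpow_natCast, ← rpow_mul hr, Nat.cast_ofNat, mul_div_cancel₀ _ two_ne_zero]
  rwa [neg_div, exp_neg, ← div_eq_mul_inv, div_le_iff₀ (exp_pos _), ← h_sq]

lemma heatKernel_le (ht : 0 < t) {w : EuclideanSpace ℝ (Fin d)} (hw : w ≠ 0) :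
    heatKernel d t w ≤ (d / (2 * π)) ^ ((d : ℝ) / 2) * ‖w‖ ^ (-(d : ℝ)) := by
  have hw₀ : 0 < ‖w‖ := norm_pos_iff.2 hw
  rw [rpow_neg hw₀.le, ← div_eq_mul_inv, le_div_iff₀ (rpow_pos_of_pos hw₀ _)]
  calc heatKernel d t w * ‖w‖ ^ (d : ℝ)
      = (2 * π * t) ^ (-(d : ℝ) / 2) * (‖w‖ ^ (d : ℝ) * exp (-‖w‖ ^ 2 / (2 * t))) := by
        rw [heatKernel, mul_assoc, mul_comm (exp _)]
    _ ≤ (2 * π * t) ^ (-(d : ℝ) / 2) * (d * t) ^ ((d : ℝ) / 2) := by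
        gcongr
        exact rpow_mul_exp_neg_sq_div_le hw₀.le d.cast_nonneg ht
    _ = (d / (2 * π)) ^ ((d : ℝ) / 2) := by
        rw [neg_div, rpow_neg (by positivity), inv_mul_eq_div,
          ← div_rpow (by positivity) (by positivity), mul_div_mul_right _ _ ht.ne']

lemma norm_rpow_mul_heatKernel_le (hα : 0 ≤ α) (ht : 0 < t) (w : EuclideanSpace ℝ (Fin d)) :
    ‖w‖ ^ α * heatKernel d t w ≤
      2 ^ ((d : ℝ) / 2) * (2 * α * t) ^ (α / 2) * heatKernel d (2 * t) w := by
  have h_exp : exp (-‖w‖ ^ 2 / (2 * t)) =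
      exp (-‖w‖ ^ 2 / (2 * (2 * t))) * exp (-‖w‖ ^ 2 / (2 * (2 * t))) := by
    rw [← exp_add]
    congr 1
    field_simp
    ring
  have h_const : (2 * π * t) ^ (-(d : ℝ) / 2) =
      2 ^ ((d : ℝ) / 2) * (2 * π * (2 * t)) ^ (-(d : ℝ) / 2) := by
    rw [mul_left_comm _ 2, mul_rpow zero_le_two (by positivity), ← mul_assoc,
      ← rpow_add zero_lt_two, neg_div, add_neg_cancel, rpow_zero, one_mul]
  have h_absorb : ‖w‖ ^ α * exp (-‖w‖ ^ 2 / (2 * (2 * t))) ≤ (2 * α * t) ^ (α / 2) := by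
    convert rpow_mul_exp_neg_sq_div_le (norm_nonneg w) hα (mul_pos two_pos ht) using 2
    ring
  calc ‖w‖ ^ α * heatKernel d t w
      = 2 ^ ((d : ℝ) / 2) * (‖w‖ ^ α * exp (-‖w‖ ^ 2 / (2 * (2 * t)))) *
          heatKernel d (2 * t) w := by
        rw [heatKernel, heatKernel, h_exp, h_const]
        ring
    _ ≤ _ := by
        gcongr
        exact heatKernel_nonneg_s19 (by positivity) w

variable {a : EuclideanSpace ℝ (Fin d)}

lemma heatKernel_le_of_mem_ball (ht : 0 < t) (ha : a ≠ 0) :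
    ∀ w ∈ Metric.ball a (‖a‖ / 2),
      heatKernel d t w ≤ (d / (2 * π)) ^ ((d : ℝ) / 2) * (‖a‖ / 2) ^ (-(d : ℝ)) := by
  intro w hw
  have hr : 0 < ‖a‖ / 2 := half_pos (norm_pos_iff.2 ha)
  have hrw : ‖a‖ / 2 ≤ ‖w‖ := by
    linarith [mem_ball_iff_norm'.1 hw, norm_sub_norm_le a w]
  refine (heatKernel_le ht (norm_pos_iff.1 (hr.trans_le hrw))).trans ?_
  exact mul_le_mul_of_nonneg_left
    (rpow_le_rpow_of_nonpos hr hrw (neg_nonpos.2 d.cast_nonneg)) (by positivity)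

lemma integrable_heatKernel_mul_norm_sub_rpow_neg (ht : 0 < t) (ha : a ≠ 0) (hα : 0 ≤ α)
    (hαd : α < d) : Integrable fun w ↦ heatKernel d t w * ‖a - w‖ ^ (-α) :=
  integrable_mul_norm_sub_rpow_neg (heatKernel_nonneg_s19 ht.le) (integrable_heatKernel ht) hα
    (by simpa using hαd) (half_pos (norm_pos_iff.2 ha)) (heatKernel_le_of_mem_ball ht ha)

lemma integral_heatKernel_mul_norm_sub_rpow_neg_le (ht : 0 < t) (ha : a ≠ 0) (hα : 0 ≤ α)
    (hαd : α < d) :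
    ∫ w, heatKernel d t w * ‖a - w‖ ^ (-α) ≤
      (1 + (d / (2 * π)) ^ ((d : ℝ) / 2) *
        ∫ z in Metric.ball (0 : EuclideanSpace ℝ (Fin d)) 1, ‖z‖ ^ (-α)) *
        (‖a‖ / 2) ^ (-α) := by
  have hr : 0 < ‖a‖ / 2 := half_pos (norm_pos_iff.2 ha)
  refine (integral_mul_norm_sub_rpow_neg_le (heatKernel_nonneg_s19 ht.le) (integrable_heatKernel ht)
    hα (by simpa using hαd) hr (heatKernel_le_of_mem_ball ht ha)).trans_eq ?_
  have h_pow : (‖a‖ / 2) ^ (-α) = (‖a‖ / 2) ^ (-(d : ℝ)) * (‖a‖ / 2) ^ (d - α) := by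
    rw [← rpow_add hr]
    ring_nf
  rw [integral_heatKernel ht, finrank_euclideanSpace_fin, h_pow]
  ring

end HeatKernel

section LogIncrement

variable {d : ℕ} {t α : ℝ} {a : EuclideanSpace ℝ (Fin d)}

lemma heatKernel_mul_abs_log_norm_sub_ae_le (ht : 0 < t) (ha : a ≠ 0) (hα : 0 < α)
    (hα₁ : α ≤ 1) :
    ∀ᵐ w, heatKernel d t w * |log ‖a - w‖ - log ‖a‖| ≤
      2 ^ ((d : ℝ) / 2) * (2 * α * t) ^ (α / 2) / α *
        (heatKernel d (2 * t) w * ‖a - w‖ ^ (-α) + ‖a‖ ^ (-α) * heatKernel d (2 * t) w) := by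
  have : Nontrivial (EuclideanSpace ℝ (Fin d)) := nontrivial_of_ne a 0 ha
  filter_upwards [Measure.ae_ne volume a] with w hw
  have h_nonneg : 0 ≤ heatKernel d t w := heatKernel_nonneg_s19 ht.le w
  calc heatKernel d t w * |log ‖a - w‖ - log ‖a‖|
      ≤ heatKernel d t w * (‖w‖ ^ α * (‖a - w‖ ^ (-α) + ‖a‖ ^ (-α)) / α) := by
        gcongr
        exact abs_log_norm_sub_sub_log_norm_le ha hw hα hα₁
    _ = ‖w‖ ^ α * heatKernel d t w * ((‖a - w‖ ^ (-α) + ‖a‖ ^ (-α)) / α) := by ring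
    _ ≤ 2 ^ ((d : ℝ) / 2) * (2 * α * t) ^ (α / 2) * heatKernel d (2 * t) w *
          ((‖a - w‖ ^ (-α) + ‖a‖ ^ (-α)) / α) :=
        mul_le_mul_of_nonneg_right (norm_rpow_mul_heatKernel_le hα.le ht w) (by positivity)
    _ = _ := by ring

lemma integrable_heatKernel_mul_abs_log_norm_sub (ht : 0 < t) (ha : a ≠ 0) (hα : 0 < α)
    (hα₁ : α ≤ 1) (hαd : α < d) :
    Integrable fun w ↦ heatKernel d t w * |log ‖a - w‖ - log ‖a‖| := by
  have h2t : 0 < 2 * t := mul_pos two_pos ht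
  have h_majorant := ((integrable_heatKernel_mul_norm_sub_rpow_neg h2t ha hα.le hαd).add
    ((integrable_heatKernel h2t).const_mul (‖a‖ ^ (-α)))).const_mul
      (2 ^ ((d : ℝ) / 2) * (2 * α * t) ^ (α / 2) / α)
  refine h_majorant.mono' (by fun_prop : Measurable _).aestronglyMeasurable ?_
  filter_upwards [heatKernel_mul_abs_log_norm_sub_ae_le ht ha hα hα₁] with w hw
  rwa [norm_of_nonneg (mul_nonneg (heatKernel_nonneg_s19 ht.le w) (abs_nonneg _))]

variable (d) in
lemma exists_integral_heatKernel_mul_abs_log_norm_sub_le (hα : 0 < α) (hα₁ : α ≤ 1)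
    (hαd : α < d) :
    ∃ C > 0, ∀ t > 0, ∀ a : EuclideanSpace ℝ (Fin d), a ≠ 0 →
      ∫ w, heatKernel d t w * |log ‖a - w‖ - log ‖a‖| ≤ C * ‖a‖ ^ (-α) * t ^ (α / 2) := by
  set K : ℝ := 1 + (d / (2 * π)) ^ ((d : ℝ) / 2) *
    ∫ z in Metric.ball (0 : EuclideanSpace ℝ (Fin d)) 1, ‖z‖ ^ (-α)
  have : 0 < K := by positivity
  refine ⟨2 ^ ((d : ℝ) / 2) * (2 * α) ^ (α / 2) / α * (2 ^ α * K + 1), by positivity,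
    fun t ht a ha ↦ ?_⟩
  have h2t : 0 < 2 * t := mul_pos two_pos ht
  have h_pot := integrable_heatKernel_mul_norm_sub_rpow_neg h2t ha hα.le hαd
  have h_heat := (integrable_heatKernel (d := d) h2t).const_mul (‖a‖ ^ (-α))
  calc ∫ w, heatKernel d t w * |log ‖a - w‖ - log ‖a‖|
      ≤ ∫ w, 2 ^ ((d : ℝ) / 2) * (2 * α * t) ^ (α / 2) / α *
          (heatKernel d (2 * t) w * ‖a - w‖ ^ (-α) + ‖a‖ ^ (-α) * heatKernel d (2 * t) w) :=
        integral_mono_ae (integrable_heatKernel_mul_abs_log_norm_sub ht ha hα hα₁ hαd)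
          ((h_pot.add h_heat).const_mul _) (heatKernel_mul_abs_log_norm_sub_ae_le ht ha hα hα₁)
    _ = 2 ^ ((d : ℝ) / 2) * (2 * α * t) ^ (α / 2) / α *
          ((∫ w, heatKernel d (2 * t) w * ‖a - w‖ ^ (-α)) + ‖a‖ ^ (-α)) := by
        rw [integral_const_mul, integral_add h_pot h_heat, integral_const_mul,
          integral_heatKernel h2t, mul_one]
    _ ≤ 2 ^ ((d : ℝ) / 2) * (2 * α * t) ^ (α / 2) / α * (K * (‖a‖ / 2) ^ (-α) + ‖a‖ ^ (-α)) := by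
        gcongr
        exact integral_heatKernel_mul_norm_sub_rpow_neg_le h2t ha hα.le hαd
    _ = _ := by
        rw [mul_rpow (by positivity) ht.le, div_rpow (norm_nonneg a) zero_le_two,
          rpow_neg zero_le_two, div_inv_eq_mul]
        ring

end LogIncrement

theorem mollified_log_modulus_general (d : ℕ) {α : ℝ} (hα : 0 < α) (hα₁ : α ≤ 1) (hαd : α < d) :
    ∃ C > 0, ∀ x y : EuclideanSpace ℝ (Fin d), y ≠ x → ∀ ε : ℝ, 0 < ε →
      Integrable (fun z ↦ heatKernel d ε (y - z) * |log ‖z - x‖ - log ‖y - x‖|) ∧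
      ∫ z, heatKernel d ε (y - z) * |log ‖z - x‖ - log ‖y - x‖| ≤
        C * ‖y - x‖ ^ (-α) * ε ^ (α / 2) := by
  obtain ⟨C, hC, h⟩ := exists_integral_heatKernel_mul_abs_log_norm_sub_le d hα hα₁ hαd
  refine ⟨C, hC, fun x y hyx ε hε ↦ ?_⟩
  have hyx₀ : y - x ≠ 0 := sub_ne_zero.2 hyx
  let F (w : EuclideanSpace ℝ (Fin d)) : ℝ := heatKernel d ε w * |log ‖y - x - w‖ - log ‖y - x‖|
  have hF : Integrable F := integrable_heatKernel_mul_abs_log_norm_sub hε hyx₀ hα hα₁ hαd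
  have h_shift : (fun z ↦ heatKernel d ε (y - z) * |log ‖z - x‖ - log ‖y - x‖|) =
      fun z ↦ F (y - z) := by
    simp only [F, sub_sub_sub_cancel_left]
  rw [h_shift, integral_sub_left_eq_self F volume y]
  exact ⟨hF.comp_sub_left y, h ε hε (y - x) hyx₀⟩

theorem mollified_log_modulus :
    ∃ C > 0, ∀ x y : EuclideanSpace ℝ (Fin 3), y ≠ x → ∀ ε : ℝ, 0 < ε → ε < 1 →
      (∫ z, heatKernel 3 ε (y - z) * |Real.log ‖z - x‖ - Real.log ‖y - x‖|) ≤
        C * ‖y - x‖ ^ (-(1 : ℝ) / 2) * ε ^ ((1 : ℝ) / 4) := by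
  obtain ⟨C, hC, h⟩ := mollified_log_modulus_general 3 (α := 1 / 2) (by norm_num) (by norm_num)
    (by norm_num)
  exact ⟨C, hC, fun x y hyx ε hε _ ↦ by convert (h x y hyx ε hε).2 using 3 <;> norm_num⟩
end
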